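/- Let F be an algebraically closed field of characteristic ≠ 2, m ≥ 1 an integer, and q ∈ F with q ≠ 0, q ≠ ±1, and q² not a root of unity. Let A be the quantum Smith algebra: the unital associative F-algebra with generators E, F', K, K^{−1} and defining relations KE = q²EK, KF' = q^{−2}F'K, KK^{−1} = K^{−1}K = 1, and EF' − F'E = (K^m − K^{−m})/(q − q^{−1}); and put c = F'E + (q^mK^m + q^{−m}K^{−m})/((q^m − q^{−m})(q − q^{−1})) in A. If V is a simple A-module with a vector w such that V = A·w and E·w = ζ·w for some nonzero ζ ∈ F, then there exists ϑ ∈ F such that Ann_A(V) = A·(c − ϑ). -/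

import Mathlib

universe u v

/-- The defining relations of the quantum Smith algebra: `KE = q²EK`, `KF' = q⁻²F'K`,
`KK⁻¹ = K⁻¹K = 1`, `EF' − F'E = (K^m − K^{−m})/(q − q⁻¹)`
(here `0 ↦ E`, `1 ↦ F'`, `2 ↦ K`, `3 ↦ K⁻¹`). -/
inductive QSmithRel (F : Type u) [Field F] (q : F) (m : ℕ) :
    FreeAlgebra F (Fin 4) → FreeAlgebra F (Fin 4) → Prop
  | KE : QSmithRel F q m
      (FreeAlgebra.ι F 2 * FreeAlgebra.ι F 0)
      (algebraMap F (FreeAlgebra F (Fin 4)) (q ^ 2) *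
        (FreeAlgebra.ι F 0 * FreeAlgebra.ι F 2))
  | KF : QSmithRel F q m
      (FreeAlgebra.ι F 2 * FreeAlgebra.ι F 1)
      (algebraMap F (FreeAlgebra F (Fin 4)) ((q ^ 2)⁻¹) *
        (FreeAlgebra.ι F 1 * FreeAlgebra.ι F 2))
  | KKinv : QSmithRel F q m (FreeAlgebra.ι F 2 * FreeAlgebra.ι F 3) 1
  | KinvK : QSmithRel F q m (FreeAlgebra.ι F 3 * FreeAlgebra.ι F 2) 1
  | EF : QSmithRel F q m
      (FreeAlgebra.ι F 0 * FreeAlgebra.ι F 1 -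
        FreeAlgebra.ι F 1 * FreeAlgebra.ι F 0)
      (algebraMap F (FreeAlgebra F (Fin 4)) ((q - q⁻¹)⁻¹) *
        (FreeAlgebra.ι F (2 : Fin 4) ^ m - FreeAlgebra.ι F (3 : Fin 4) ^ m))

/-- The quantum Smith algebra. -/
abbrev QSmithAlgebra (F : Type u) [Field F] (q : F) (m : ℕ) :=
  RingQuot (QSmithRel F q m)

/-- The generator `E`. -/
noncomputable def qsE (F : Type u) [Field F] (q : F) (m : ℕ) : QSmithAlgebra F q m :=
  RingQuot.mkAlgHom F (QSmithRel F q m) (FreeAlgebra.ι F 0)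

/-- The generator `F'`. -/
noncomputable def qsF (F : Type u) [Field F] (q : F) (m : ℕ) : QSmithAlgebra F q m :=
  RingQuot.mkAlgHom F (QSmithRel F q m) (FreeAlgebra.ι F 1)

/-- The generator `K`. -/
noncomputable def qsK (F : Type u) [Field F] (q : F) (m : ℕ) : QSmithAlgebra F q m :=
  RingQuot.mkAlgHom F (QSmithRel F q m) (FreeAlgebra.ι F 2)

/-- The generator `K⁻¹`. -/
noncomputable def qsKinv (F : Type u) [Field F] (q : F) (m : ℕ) : QSmithAlgebra F q m :=
  RingQuot.mkAlgHom F (QSmithRel F q m) (FreeAlgebra.ι F 3)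

/-- The central element
`c = F'E + (q^m K^m + q^{−m} K^{−m}) / ((q^m − q^{−m})(q − q^{−1}))`. -/
noncomputable def qsC (F : Type u) [Field F] (q : F) (m : ℕ) : QSmithAlgebra F q m :=
  qsF F q m * qsE F q m +
    algebraMap F (QSmithAlgebra F q m)
        (q ^ m / ((q ^ m - (q ^ m)⁻¹) * (q - q⁻¹))) * qsK F q m ^ m +
    algebraMap F (QSmithAlgebra F q m)
        ((q ^ m)⁻¹ / ((q ^ m - (q ^ m)⁻¹) * (q - q⁻¹))) * qsKinv F q m ^ m

/-!
The algebra is a generalized Weyl algebra: `F'E = c - ρ(K)` and `EF' = c - ρ(q⁻²K)` for a Laurent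
polynomial `ρ`, with `c` central. On `V = A • w` the vectors `K ^ j • w` are eigenvectors of `E` for
the distinct eigenvalues `q⁻²ʲζ`, so `f ↦ f(K) • w` is injective on Laurent polynomials; the same
grading shows that the `ζ`-eigenvectors of `E` are exactly `F[c] • w`. By Schur's lemma `c` is
invertible or zero on `V`, and in the first case `c⁻¹ • w` is a `ζ`-eigenvector, so `c⁻¹` is a
polynomial in `c`. Hence `c` is algebraic over `F`, and acts by a scalar `ϑ`.

Modulo `c - ϑ` every element of `A` is a finite sum `∑ gₙ(K) Wₙ` with `Wₙ = F'ⁿ` or `E⁻ⁿ`, and `Wₙ`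
acts on `F[K, K⁻¹] • w` as `f ↦ Pₙ * f(q²ⁿT)` with `Pₙ ≠ 0`. If such a sum annihilates `V`, then
`∑ gₙ Pₙ f(q²ⁿT) = 0` for all `f`, and Dedekind's independence of the distinct characters
`f ↦ f(q²ⁿT)` forces all `gₙ` to vanish.
-/

open LaurentPolynomial

section General

theorem inf_iSup_le_of_iSupIndep {ι α : Type*} [CompleteLattice α] [IsModularLattice α]
    {V W : ι → α} (hV : iSupIndep V) (hWV : ∀ i, W i ≤ V i) (i : ι) :
    V i ⊓ ⨆ j, W j ≤ W i := by
  have hdisj : (⨆ (j) (_ : j ≠ i), W j) ⊓ V i = ⊥ :=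
    ((hV i).mono_right (iSup₂_mono fun j _ => hWV j)).symm.eq_bot
  rw [iSup_split_single W i, inf_comm, sup_inf_assoc_of_le _ (hWV i), hdisj, sup_bot_eq]

theorem eq_top_of_adjoin_eq_top {R A M : Type*} [CommSemiring R] [Semiring A] [Algebra R A]
    [AddCommMonoid M] [Module R M] [Module A M] [IsScalarTower R A M] {s : Set A}
    (hs : Algebra.adjoin R s = ⊤) {w : M} (hw : Submodule.span A {w} = ⊤) {N : Submodule R M}
    (hwN : w ∈ N) (hN : ∀ a ∈ s, N ≤ N.comap (Algebra.lsmul R R M a)) : N = ⊤ := by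
  have hstable (a : A) : N ≤ N.comap (Algebra.lsmul R R M a) := by
    have ha : a ∈ Algebra.adjoin R s := hs ▸ Algebra.mem_top
    induction ha using Algebra.adjoin_induction with
    | mem a ha => exact hN a ha
    | algebraMap r => exact fun x hx => by simpa using N.smul_mem r hx
    | add a b _ _ iha ihb =>
      exact fun x hx => by simpa [add_smul] using N.add_mem (iha hx) (ihb hx)
    | mul a b _ _ iha ihb => exact fun x hx => by simpa [mul_smul] using iha (ihb hx)
  refine eq_top_iff.2 fun x _ => ?_
  obtain ⟨a, rfl⟩ := Submodule.mem_span_singleton.1 (hw ▸ Submodule.mem_top : x ∈ _)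
  exact hstable a hwN

theorem isIntegral_of_inv_mem_adjoin {k D : Type*} [Field k] [DivisionRing D] [Algebra k D]
    {x : D} (h : x⁻¹ ∈ Algebra.adjoin k {x}) : IsIntegral k x := by
  obtain rfl | hx := eq_or_ne x 0
  · exact isIntegral_zero
  rw [Algebra.adjoin_singleton_eq_range_aeval] at h
  obtain ⟨p, hp⟩ := h
  refine IsAlgebraic.isIntegral ⟨Polynomial.X * p - 1, fun h0 => ?_, ?_⟩
  · simpa using congrArg (Polynomial.eval 0) h0
  · simpa [sub_eq_zero, hx] using congrArg (x * ·) hp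

theorem mem_range_algebraMap_of_isIntegral {k D : Type*} [Field k] [IsAlgClosed k]
    [Ring D] [IsDomain D] [Algebra k D] {x : D} (hx : IsIntegral k x) :
    x ∈ (algebraMap k D).range :=
  minpoly.mem_range_of_degree_eq_one k x <|
    IsAlgClosed.degree_eq_one_of_irreducible k (minpoly.irreducible hx)

theorem ne_zero_of_forall_exists_smul_eq {A M : Type*} [Zero M] [SMulZeroClass A M]
    [Nontrivial M] {w : M} (hw : ∀ v : M, ∃ a : A, a • w = v) : w ≠ 0 := by
  rintro rfl
  obtain ⟨v, hv⟩ := exists_ne (0 : M)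
  obtain ⟨a, rfl⟩ := hw v
  exact hv (smul_zero a)

theorem aeval_smulLeft_apply {k A V : Type*} [CommSemiring k] [Semiring A] [Algebra k A]
    [AddCommMonoid V] [Module k V] [Module A V] [IsScalarTower k A V] {a : A}
    (ha : a ∈ Set.center A) (p : Polynomial k) (v : V) :
    Polynomial.aeval (Module.End.smulLeft a ha : Module.End A V) p v =
      Polynomial.aeval a p • v := by
  induction p using Polynomial.induction_on' with
  | add p q hp hq => rw [map_add, map_add, LinearMap.add_apply, hp, hq, add_smul]
  | monomial n c =>
    have hpow : (Module.End.smulLeft a ha ^ n : Module.End A V) v = a ^ n • v := by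
      rw [Module.End.pow_apply]
      exact congrFun (smul_iterate a n) v
    rw [Polynomial.aeval_monomial, Polynomial.aeval_monomial, ← Algebra.smul_def,
      ← Algebra.smul_def, LinearMap.smul_apply, hpow, smul_assoc]

theorem sub_inv_ne_zero_of_sq_ne_one {F : Type*} [DivisionRing F] {x : F} (hx : x ≠ 0)
    (hx2 : x ^ 2 ≠ 1) : x - x⁻¹ ≠ 0 := by
  rwa [sub_ne_zero, Ne, ← mul_eq_one_iff_eq_inv₀ hx, ← pow_two]

theorem injective_zpow_mul_of_not_isOfFinOrder {k : Type*} [MonoidWithZero k]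
    [IsRightCancelMulZero k] {r : kˣ}
    (hr : ¬IsOfFinOrder r) {ζ : k} (hζ : ζ ≠ 0) :
    Function.Injective fun j : ℤ => ((r ^ j : kˣ) : k) * ζ :=
  (mul_left_injective₀ hζ).comp
    (Units.val_injective.comp (injective_zpow_iff_not_isOfFinOrder.2 hr))

end General

section LaurentEvaluation

variable {k A : Type*} [CommSemiring k] [Semiring A] [Algebra k A]

/-- Evaluation of Laurent polynomials at a unit of a possibly noncommutative algebra. -/
noncomputable def laurentAeval (x : Aˣ) : k[T;T⁻¹] →ₐ[k] A :=
  AddMonoidAlgebra.lift k A ℤ ((Units.coeHom A).comp (zpowersHom Aˣ x))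

@[simp]
theorem laurentAeval_T (x : Aˣ) (n : ℤ) :
    laurentAeval x (T n : k[T;T⁻¹]) = ((x ^ n : Aˣ) : A) := by
  rw [laurentAeval, T, AddMonoidAlgebra.lift_single, one_smul]
  rfl

theorem laurentPolynomial_linearMap_ext {M : Type*} [AddCommMonoid M] [Module k M]
    {φ ψ : k[T;T⁻¹] →ₗ[k] M} (h : ∀ n, φ (T n) = ψ (T n)) : φ = ψ :=
  (AddMonoidAlgebra.basis ℤ k).ext h

theorem laurentPolynomial_linearMap_injective {M : Type*} [AddCommMonoid M] [Module k M]
    {φ : k[T;T⁻¹] →ₗ[k] M} (h : LinearIndependent k fun n => φ (T n)) :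
    Function.Injective φ := by
  rw [← (AddMonoidAlgebra.basis ℤ k).constr_self k φ]
  exact (AddMonoidAlgebra.basis ℤ k).injective_constr_of_linearIndependent h

/-- The automorphism `T ↦ r T` of Laurent polynomials, for a unit `r` of the base ring. -/
noncomputable def laurentScale (r : kˣ) : k[T;T⁻¹] →ₐ[k] k[T;T⁻¹] :=
  AddMonoidAlgebra.lift k k[T;T⁻¹] ℤ <|
    ((algebraMap k k[T;T⁻¹] : k →* k[T;T⁻¹]).comp ((Units.coeHom k).comp (zpowersHom kˣ r))) *
      AddMonoidAlgebra.of k ℤ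

@[simp]
theorem laurentScale_T (r : kˣ) (n : ℤ) :
    laurentScale r (T n : k[T;T⁻¹]) = ((r ^ n : kˣ) : k) • T n := by
  rw [laurentScale, T, AddMonoidAlgebra.lift_single, one_smul, Algebra.smul_def]
  rfl

theorem laurentScale_laurentScale (r s : kˣ) (f : k[T;T⁻¹]) :
    laurentScale r (laurentScale s f) = laurentScale (r * s) f := by
  have hmaps : (laurentScale r).toLinearMap ∘ₗ (laurentScale s).toLinearMap =
      (laurentScale (r * s)).toLinearMap :=
    laurentPolynomial_linearMap_ext fun n => by simp [smul_smul, mul_zpow, mul_comm]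
  exact LinearMap.congr_fun hmaps f

@[simp]
theorem laurentScale_one (f : k[T;T⁻¹]) : laurentScale 1 f = f := by
  have hmaps : (laurentScale (1 : kˣ)).toLinearMap = LinearMap.id :=
    laurentPolynomial_linearMap_ext fun n => by simp
  exact LinearMap.congr_fun hmaps f

@[simp]
theorem laurentScale_inv_laurentScale (r : kˣ) (f : k[T;T⁻¹]) :
    laurentScale r⁻¹ (laurentScale r f) = f := by
  rw [laurentScale_laurentScale, inv_mul_cancel, laurentScale_one]

theorem laurentScale_injective (r : kˣ) :
    Function.Injective (laurentScale r : k[T;T⁻¹] → k[T;T⁻¹]) :=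
  Function.LeftInverse.injective (laurentScale_inv_laurentScale r)

theorem units_zpow_mul_of_mul_eq_smul {a : A} {x : Aˣ} {r : kˣ}
    (h : (x : A) * a = (r : k) • (a * x)) (n : ℤ) :
    ((x ^ n : Aˣ) : A) * a = ((r ^ n : kˣ) : k) • (a * ((x ^ n : Aˣ) : A)) := by
  let rA : Aˣ := Units.map (algebraMap k A) r
  have hcomm : Commute rA x := Units.ext (Algebra.commutes (r : k) (x : A))
  have hsemi : SemiconjBy a ((rA * x : Aˣ) : A) x := by
    simpa [SemiconjBy, rA, ← Algebra.smul_def] using h.symm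
  have hpow := (hsemi.units_zpow_right n).eq
  have hrA : ((rA ^ n : Aˣ) : A) = algebraMap k A ((r ^ n : kˣ) : k) :=
    congrArg Units.val (map_zpow (Units.map (algebraMap k A : k →* A)) r n).symm
  rw [hcomm.mul_zpow, Units.val_mul, hrA, ← Algebra.smul_def, mul_smul_comm] at hpow
  exact hpow.symm

theorem laurentAeval_mul_of_mul_eq_smul {a : A} {x : Aˣ} {r : kˣ}
    (h : (x : A) * a = (r : k) • (a * x)) (f : k[T;T⁻¹]) :
    laurentAeval x f * a = a * laurentAeval x (laurentScale r f) := by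
  have hmaps : LinearMap.mulRight k a ∘ₗ (laurentAeval x).toLinearMap =
      LinearMap.mulLeft k a ∘ₗ (laurentAeval x).toLinearMap ∘ₗ (laurentScale r).toLinearMap :=
    laurentPolynomial_linearMap_ext fun n => by
      simpa using units_zpow_mul_of_mul_eq_smul h n
  exact LinearMap.congr_fun hmaps f

end LaurentEvaluation

theorem linearIndependent_laurentScale_zpow {k : Type*} [CommRing k] [IsDomain k] {r : kˣ}
    (hr : ¬IsOfFinOrder r) :
    LinearIndependent k[T;T⁻¹]
      fun n : ℤ => (laurentScale (r ^ n) : k[T;T⁻¹] →ₐ[k] k[T;T⁻¹]).toLinearMap := by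
  refine (linearIndependent_algHom_toLinearMap k k[T;T⁻¹] k[T;T⁻¹]).comp
    (fun n : ℤ => laurentScale (r ^ n)) fun i j hij => ?_
  have hT := congrArg (fun φ : k[T;T⁻¹] →ₐ[k] k[T;T⁻¹] => (φ (T 1)).coeff 1) hij
  simp only [laurentScale_T, zpow_one] at hT
  exact injective_zpow_iff_not_isOfFinOrder.2 hr (Units.val_injective (by simpa using hT))

/-- A quantum Smith triple: elements `E`, `F` and a unit `K` generating the `k`-algebra `A`, where
`E` and `F` have weights `r` and `r⁻¹` under conjugation by `K` and the commutator of `E` and `F` is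
the Laurent polynomial `ρ(K) - ρ(r⁻¹K)`. For the quantum Smith algebra `r = q²`. Prescribing `ρ`
rather than the commutator makes `FE + ρ(K)` central. -/
structure QuantumSmithTriple {k : Type*} [CommRing k] (r : kˣ) (ρ : k[T;T⁻¹])
    (A : Type*) [Ring A] [Algebra k A] where
  E : A
  F : A
  K : Aˣ
  K_mul_E : (K : A) * E = (r : k) • (E * K)
  K_mul_F : (K : A) * F = ((r⁻¹ : kˣ) : k) • (F * K)
  E_mul_F_sub_F_mul_E : E * F - F * E = laurentAeval K (ρ - laurentScale r⁻¹ ρ)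
  adjoin_eq_top : Algebra.adjoin k {E, F, (K : A), ((K⁻¹ : Aˣ) : A)} = ⊤

namespace QuantumSmithTriple

section Algebra

variable {k : Type*} [CommRing k] {r : kˣ} {ρ : k[T;T⁻¹]} {A : Type*} [Ring A] [Algebra k A]
  (S : QuantumSmithTriple r ρ A)

/-- Evaluation of Laurent polynomials at `K`. -/
noncomputable abbrev evalK : k[T;T⁻¹] →ₐ[k] A := laurentAeval S.K

theorem evalK_T_one : S.evalK (T 1) = (S.K : A) := by simp

theorem evalK_T_neg_one : S.evalK (T (-1)) = ((S.K⁻¹ : Aˣ) : A) := by simp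

theorem evalK_mul_E (f : k[T;T⁻¹]) : S.evalK f * S.E = S.E * S.evalK (laurentScale r f) :=
  laurentAeval_mul_of_mul_eq_smul S.K_mul_E f

theorem evalK_mul_F (f : k[T;T⁻¹]) : S.evalK f * S.F = S.F * S.evalK (laurentScale r⁻¹ f) :=
  laurentAeval_mul_of_mul_eq_smul S.K_mul_F f

theorem E_mul_evalK (f : k[T;T⁻¹]) : S.E * S.evalK f = S.evalK (laurentScale r⁻¹ f) * S.E := by
  rw [evalK_mul_E, laurentScale_laurentScale, mul_inv_cancel, laurentScale_one]

theorem F_mul_evalK (f : k[T;T⁻¹]) : S.F * S.evalK f = S.evalK (laurentScale r f) * S.F := by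
  rw [evalK_mul_F, laurentScale_inv_laurentScale]

/-- The Casimir element `FE + ρ(K)`, the element `c` of the quantum Smith algebra. -/
noncomputable def casimir : A := S.F * S.E + S.evalK ρ

theorem F_mul_E : S.F * S.E = S.casimir - S.evalK ρ := by
  rw [casimir, add_sub_cancel_right]

theorem E_mul_F : S.E * S.F = S.casimir - S.evalK (laurentScale r⁻¹ ρ) := by
  rw [sub_eq_iff_eq_add.1 S.E_mul_F_sub_F_mul_E, F_mul_E, map_sub]
  abel

theorem commute_casimir_E : Commute S.casimir S.E :=
  calc S.casimir * S.E = (S.E * S.F + S.evalK (laurentScale r⁻¹ ρ)) * S.E := by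
        rw [E_mul_F, sub_add_cancel]
    _ = S.E * (S.F * S.E + S.evalK ρ) := by
        rw [add_mul, mul_add, E_mul_evalK, mul_assoc]
    _ = S.E * S.casimir := rfl

theorem commute_casimir_F : Commute S.casimir S.F :=
  calc S.casimir * S.F = (S.F * S.E + S.evalK ρ) * S.F := rfl
    _ = S.F * (S.E * S.F + S.evalK (laurentScale r⁻¹ ρ)) := by
        rw [add_mul, mul_add, evalK_mul_F, mul_assoc]
    _ = S.F * S.casimir := by
        rw [E_mul_F, sub_add_cancel]

theorem commute_casimir_evalK (f : k[T;T⁻¹]) : Commute S.casimir (S.evalK f) := by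
  have hFE : Commute (S.F * S.E) (S.evalK f) := by
    rw [Commute, SemiconjBy, mul_assoc, E_mul_evalK, ← mul_assoc, F_mul_evalK,
      laurentScale_laurentScale, mul_inv_cancel, laurentScale_one, mul_assoc]
  exact hFE.add_left ((Commute.all ρ f).map S.evalK)

theorem casimir_mem_center : S.casimir ∈ Subalgebra.center k A := by
  have hle : Algebra.adjoin k {S.E, S.F, (S.K : A), ((S.K⁻¹ : Aˣ) : A)} ≤
      Subalgebra.centralizer k {S.casimir} := by
    rw [Algebra.adjoin_le_iff]
    simp only [Set.insert_subset_iff, Set.singleton_subset_iff, SetLike.mem_coe,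
      Subalgebra.mem_centralizer_iff, Set.mem_singleton_iff, forall_eq]
    refine ⟨S.commute_casimir_E, S.commute_casimir_F, ?_, ?_⟩
    · exact S.evalK_T_one ▸ S.commute_casimir_evalK (T 1)
    · exact S.evalK_T_neg_one ▸ S.commute_casimir_evalK (T (-1))
  rw [Subalgebra.mem_center_iff]
  intro a
  have ha : a ∈ Subalgebra.centralizer k {S.casimir} := hle (S.adjoin_eq_top ▸ Algebra.mem_top)
  exact ((Subalgebra.mem_centralizer_iff k).1 ha _ rfl).symm

/-- The Weyl monomials: `weylMonomial n` is `F ^ n` for `n ≥ 0` and `E ^ (-n)` for `n ≤ 0`. -/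
def weylMonomial (n : ℤ) : A := S.F ^ n.toNat * S.E ^ (-n).toNat

@[simp]
theorem weylMonomial_natCast (n : ℕ) : S.weylMonomial n = S.F ^ n := by
  simp [weylMonomial]

@[simp]
theorem weylMonomial_neg_natCast (n : ℕ) : S.weylMonomial (-n) = S.E ^ n := by
  simp [weylMonomial]

theorem casimir_mul_sub_smul_mem (ϑ : k) (a : A) :
    S.casimir * a - ϑ • a ∈ Ideal.span {S.casimir - algebraMap k A ϑ} := by
  rw [Ideal.mem_span_singleton']
  exact ⟨a, by rw [mul_sub, Subalgebra.mem_center_iff.1 S.casimir_mem_center, ← Algebra.commutes,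
    Algebra.smul_def]⟩

theorem casimir_sub_evalK_mul_sub_mem (ϑ : k) (f : k[T;T⁻¹]) (a : A) :
    (S.casimir - S.evalK f) * a - S.evalK (algebraMap k k[T;T⁻¹] ϑ - f) * a ∈
      Ideal.span {S.casimir - algebraMap k A ϑ} := by
  convert S.casimir_mul_sub_smul_mem ϑ a using 1
  rw [map_sub, AlgHom.commutes, sub_mul, sub_mul, Algebra.smul_def]
  abel

theorem exists_E_mul_weylMonomial_sub_mem (ϑ : k) (n : ℤ) :
    ∃ f : k[T;T⁻¹], ∃ i : ℤ, S.E * S.weylMonomial n - S.evalK f * S.weylMonomial i ∈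
      Ideal.span {S.casimir - algebraMap k A ϑ} := by
  obtain ⟨n, rfl | rfl⟩ := n.eq_nat_or_neg
  · cases n with
    | zero => exact ⟨1, -(1 : ℕ), by simp [weylMonomial]⟩
    | succ n =>
      refine ⟨algebraMap k k[T;T⁻¹] ϑ - laurentScale r⁻¹ ρ, n, ?_⟩
      rw [weylMonomial_natCast, weylMonomial_natCast, pow_succ', ← mul_assoc, E_mul_F]
      exact S.casimir_sub_evalK_mul_sub_mem ϑ _ _
  · refine ⟨1, -(n + 1 : ℕ), ?_⟩
    rw [weylMonomial_neg_natCast, weylMonomial_neg_natCast, map_one, one_mul, pow_succ', sub_self]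
    exact zero_mem _

theorem exists_F_mul_weylMonomial_sub_mem (ϑ : k) (n : ℤ) :
    ∃ f : k[T;T⁻¹], ∃ i : ℤ, S.F * S.weylMonomial n - S.evalK f * S.weylMonomial i ∈
      Ideal.span {S.casimir - algebraMap k A ϑ} := by
  obtain ⟨n, rfl | rfl⟩ := n.eq_nat_or_neg
  · refine ⟨1, (n + 1 : ℕ), ?_⟩
    rw [weylMonomial_natCast, weylMonomial_natCast, map_one, one_mul, pow_succ', sub_self]
    exact zero_mem _
  · cases n with
    | zero => exact ⟨1, (1 : ℕ), by simp [weylMonomial]⟩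
    | succ n =>
      refine ⟨algebraMap k k[T;T⁻¹] ϑ - ρ, -n, ?_⟩
      rw [weylMonomial_neg_natCast, weylMonomial_neg_natCast, pow_succ', ← mul_assoc, F_mul_E]
      exact S.casimir_sub_evalK_mul_sub_mem ϑ _ _

theorem iSup_range_sup_span_eq_top (ϑ : k) :
    (⨆ n : ℤ, LinearMap.range
        (LinearMap.mulRight k (S.weylMonomial n) ∘ₗ S.evalK.toLinearMap)) ⊔
      (Ideal.span {S.casimir - algebraMap k A ϑ}).restrictScalars k = ⊤ := by
  set J := Ideal.span {S.casimir - algebraMap k A ϑ}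
  set N := (⨆ n : ℤ, LinearMap.range
    (LinearMap.mulRight k (S.weylMonomial n) ∘ₗ S.evalK.toLinearMap)) ⊔ J.restrictScalars k
  have hJN {a : A} (ha : a ∈ J) : a ∈ N := Submodule.mem_sup_right ha
  have hmonomial (f : k[T;T⁻¹]) (n : ℤ) : S.evalK f * S.weylMonomial n ∈ N :=
    Submodule.mem_sup_left (Submodule.mem_iSup_of_mem n ⟨f, rfl⟩)
  have hN {a : A} (ha : ∀ f n, a * (S.evalK f * S.weylMonomial n) ∈ N) :
      N ≤ N.comap (Algebra.lsmul k k A a) := by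
    refine sup_le (iSup_le fun n => ?_) fun x hx => hJN (J.smul_mem a hx)
    rintro _ ⟨f, rfl⟩
    exact ha f n
  have hreduce {a : A} (f : k[T;T⁻¹]) (ha : ∃ g i, a - S.evalK g * S.weylMonomial i ∈ J) :
      S.evalK f * a ∈ N := by
    obtain ⟨g, i, ha⟩ := ha
    have hmem := N.add_mem (hJN (J.mul_mem_left (S.evalK f) ha)) (hmonomial (f * g) i)
    rwa [mul_sub, ← mul_assoc, ← map_mul, sub_add_cancel] at hmem
  have hevalK (f g : k[T;T⁻¹]) (n : ℤ) : S.evalK f * (S.evalK g * S.weylMonomial n) ∈ N := by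
    rw [← mul_assoc, ← map_mul]
    exact hmonomial _ _
  refine eq_top_of_adjoin_eq_top S.adjoin_eq_top (Ideal.span_singleton_one (α := A))
    (by simpa [weylMonomial] using hmonomial 1 0) ?_
  simp only [Set.mem_insert_iff, Set.mem_singleton_iff, forall_eq_or_imp, forall_eq]
  refine ⟨hN fun f n => ?_, hN fun f n => ?_, hN ?_, hN ?_⟩
  · rw [← mul_assoc, E_mul_evalK, mul_assoc]
    exact hreduce _ (S.exists_E_mul_weylMonomial_sub_mem ϑ n)
  · rw [← mul_assoc, F_mul_evalK, mul_assoc]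
    exact hreduce _ (S.exists_F_mul_weylMonomial_sub_mem ϑ n)
  · exact S.evalK_T_one ▸ hevalK (T 1)
  · exact S.evalK_T_neg_one ▸ hevalK (T (-1))

theorem exists_sub_sum_evalK_mul_weylMonomial_mem (ϑ : k) (a : A) :
    ∃ (s : Finset ℤ) (g : ℤ → k[T;T⁻¹]), a - ∑ n ∈ s, S.evalK (g n) * S.weylMonomial n ∈
      Ideal.span {S.casimir - algebraMap k A ϑ} := by
  obtain ⟨x, hx, y, hy, rfl⟩ :=
    Submodule.mem_sup.1 (S.iSup_range_sup_span_eq_top ϑ ▸ Submodule.mem_top : a ∈ _)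
  obtain ⟨f, hf, rfl⟩ := (Submodule.mem_iSup_iff_exists_finsupp _ _).1 hx
  choose g hg using hf
  refine ⟨f.support, g, ?_⟩
  have hsum : ∑ n ∈ f.support, S.evalK (g n) * S.weylMonomial n = f.sum fun _ x => x :=
    Finset.sum_congr rfl fun n _ => hg n
  rw [hsum, add_sub_cancel_left]
  exact hy

end Algebra

section Eigenvectors

variable {k : Type*} [CommRing k] {r : kˣ} {ρ : k[T;T⁻¹]} {A : Type*} [Ring A] [Algebra k A]
  (S : QuantumSmithTriple r ρ A) {V : Type*} [AddCommGroup V] [Module k V] [Module A V]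
  [IsScalarTower k A V] {ζ : k} {w : V}

theorem E_smul_evalK_smul (hw : S.E • w = ζ • w) (f : k[T;T⁻¹]) :
    S.E • S.evalK f • w = ζ • S.evalK (laurentScale r⁻¹ f) • w := by
  rw [← mul_smul, E_mul_evalK, mul_smul, hw, smul_comm]

theorem evalK_T_smul_mem_eigenspace (hw : S.E • w = ζ • w) (j : ℤ) :
    S.evalK (T j) • w ∈
      Module.End.eigenspace (Algebra.lsmul k k V S.E) (((r⁻¹ ^ j : kˣ) : k) * ζ) := by
  rw [Module.End.mem_eigenspace_iff]
  change S.E • S.evalK (T j) • w = _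
  rw [E_smul_evalK_smul S hw, laurentScale_T, map_smul, smul_assoc, smul_smul, mul_comm ζ]

/-- The translate `K ^ j • k[c] • w` of the orbit of `w` under polynomials in the Casimir
element `c`. -/
noncomputable def casimirTranslate (w : V) (j : ℤ) : Submodule k V :=
  LinearMap.range ((LinearMap.toSpanSingleton A V w).restrictScalars k ∘ₗ
    LinearMap.mulLeft k (S.evalK (T j)) ∘ₗ (Polynomial.aeval S.casimir).toLinearMap)

variable {S} in
theorem mem_casimirTranslate {j : ℤ} {v : V} :
    v ∈ S.casimirTranslate w j ↔
      ∃ p : Polynomial k, S.evalK (T j) • Polynomial.aeval S.casimir p • w = v := by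
  simp [casimirTranslate, mul_smul]

theorem E_smul_aeval_casimir_smul (hw : S.E • w = ζ • w) (p : Polynomial k) :
    S.E • Polynomial.aeval S.casimir p • w = ζ • Polynomial.aeval S.casimir p • w := by
  have hp : Polynomial.aeval S.casimir p ∈ Subalgebra.center k A :=
    Algebra.adjoin_le (Set.singleton_subset_iff.2 S.casimir_mem_center)
      (Polynomial.aeval_mem_adjoin_singleton k _)
  rw [← mul_smul, Subalgebra.mem_center_iff.1 hp, mul_smul, hw, smul_comm]

theorem casimirTranslate_le_eigenspace (hw : S.E • w = ζ • w) (j : ℤ) :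
    S.casimirTranslate w j ≤
      Module.End.eigenspace (Algebra.lsmul k k V S.E) (((r⁻¹ ^ j : kˣ) : k) * ζ) := by
  intro v hv
  obtain ⟨p, rfl⟩ := mem_casimirTranslate.1 hv
  exact S.evalK_T_smul_mem_eigenspace (S.E_smul_aeval_casimir_smul hw p) j

theorem evalK_smul_aeval_casimir_smul_mem (f : k[T;T⁻¹]) (p : Polynomial k) :
    S.evalK f • Polynomial.aeval S.casimir p • w ∈ ⨆ j, S.casimirTranslate w j := by
  induction f using LaurentPolynomial.induction_on' with
  | add f g hf hg => rw [map_add, add_smul]; exact add_mem hf hg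
  | C_mul_T n a =>
    rw [← smul_eq_C_mul, map_smul, smul_assoc]
    exact Submodule.smul_mem _ a (Submodule.mem_iSup_of_mem n (mem_casimirTranslate.2 ⟨p, rfl⟩))

end Eigenvectors

section Whittaker

variable {k : Type*} [Field k] {r : kˣ} {ρ : k[T;T⁻¹]} {A : Type*} [Ring A] [Algebra k A]
  (S : QuantumSmithTriple r ρ A) {V : Type*} [AddCommGroup V] [Module k V] [Module A V]
  [IsScalarTower k A V] {ζ : k} {w : V}

theorem F_smul_evalK_smul (hζ : ζ ≠ 0) (hw : S.E • w = ζ • w) (f : k[T;T⁻¹]) :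
    S.F • S.evalK f • w = ζ⁻¹ • S.evalK (laurentScale r f) • (S.casimir - S.evalK ρ) • w := by
  have hFw : S.F • w = ζ⁻¹ • (S.casimir - S.evalK ρ) • w := by
    rw [← F_mul_E, mul_smul, hw, smul_comm S.F ζ w, inv_smul_smul₀ hζ]
  rw [← mul_smul, F_mul_evalK, mul_smul, hFw, smul_comm]

theorem evalK_smul_injective (hr : ¬IsOfFinOrder r) (hζ : ζ ≠ 0) (hw0 : w ≠ 0)
    (hw : S.E • w = ζ • w) : Function.Injective fun f : k[T;T⁻¹] => S.evalK f • w := by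
  have hne (j : ℤ) : S.evalK (T j) • w ≠ 0 := by
    rw [laurentAeval_T, ← Units.smul_def (S.K ^ j)]
    exact (smul_ne_zero_iff_ne _).2 hw0
  have hindep : LinearIndependent k fun j : ℤ => S.evalK (T j) • w :=
    Module.End.eigenvectors_linearIndependent' _ _
      (injective_zpow_mul_of_not_isOfFinOrder (isOfFinOrder_inv_iff.not.2 hr) hζ) _
      fun j => ⟨S.evalK_T_smul_mem_eigenspace hw j, hne j⟩
  exact laurentPolynomial_linearMap_injective
    (φ := (LinearMap.toSpanSingleton A V w).restrictScalars k ∘ₗ S.evalK.toLinearMap) hindep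

theorem iSup_casimirTranslate_eq_top (hζ : ζ ≠ 0) (hw : S.E • w = ζ • w)
    (hspan : Submodule.span A {w} = ⊤) : ⨆ j, S.casimirTranslate w j = ⊤ := by
  set N := ⨆ j, S.casimirTranslate w j
  have hN {a : A} (ha : ∀ (f : k[T;T⁻¹]) (p : Polynomial k),
      a • S.evalK f • Polynomial.aeval S.casimir p • w ∈ N) :
      N ≤ N.comap (Algebra.lsmul k k V a) := by
    refine iSup_le fun j v hv => ?_
    obtain ⟨p, rfl⟩ := mem_casimirTranslate.1 hv
    exact ha (T j) p
  have hevalK (f g : k[T;T⁻¹]) (p : Polynomial k) :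
      S.evalK f • S.evalK g • Polynomial.aeval S.casimir p • w ∈ N := by
    rw [← mul_smul, ← map_mul]
    exact S.evalK_smul_aeval_casimir_smul_mem _ p
  refine eq_top_of_adjoin_eq_top S.adjoin_eq_top hspan
    (by simpa using S.evalK_smul_aeval_casimir_smul_mem 1 1) ?_
  simp only [Set.mem_insert_iff, Set.mem_singleton_iff, forall_eq_or_imp, forall_eq]
  refine ⟨hN fun f p => ?_, hN fun f p => ?_, hN ?_, hN ?_⟩
  · rw [E_smul_evalK_smul S (S.E_smul_aeval_casimir_smul hw p)]
    exact N.smul_mem _ (S.evalK_smul_aeval_casimir_smul_mem _ p)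
  · rw [F_smul_evalK_smul S hζ (S.E_smul_aeval_casimir_smul hw p), sub_smul, smul_sub,
      ← mul_smul S.casimir]
    have hX := S.evalK_smul_aeval_casimir_smul_mem (w := w) (laurentScale r f) (Polynomial.X * p)
    rw [map_mul, Polynomial.aeval_X] at hX
    exact N.smul_mem _ (N.sub_mem hX (hevalK _ _ p))
  · exact S.evalK_T_one ▸ hevalK (T 1)
  · exact S.evalK_T_neg_one ▸ hevalK (T (-1))

theorem exists_aeval_casimir_smul_eq (hr : ¬IsOfFinOrder r) (hζ : ζ ≠ 0) (hw : S.E • w = ζ • w)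
    (hspan : Submodule.span A {w} = ⊤) {v : V} (hv : S.E • v = ζ • v) :
    ∃ p : Polynomial k, Polynomial.aeval S.casimir p • w = v := by
  have hindep := (Module.End.eigenspaces_iSupIndep (Algebra.lsmul k k V S.E)).comp
    (injective_zpow_mul_of_not_isOfFinOrder (isOfFinOrder_inv_iff.not.2 hr) hζ)
  have hv0 : v ∈ S.casimirTranslate w 0 := by
    refine inf_iSup_le_of_iSupIndep hindep (S.casimirTranslate_le_eigenspace hw) 0 ⟨?_, ?_⟩
    · simpa using hv
    · simp [S.iSup_casimirTranslate_eq_top hζ hw hspan]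
  simpa using mem_casimirTranslate.1 hv0

theorem exists_casimir_smul_eq_smul [IsAlgClosed k] [IsSimpleModule A V] (hr : ¬IsOfFinOrder r)
    (hζ : ζ ≠ 0) (hw0 : w ≠ 0) (hw : S.E • w = ζ • w) :
    ∃ ϑ : k, ∀ v : V, S.casimir • v = ϑ • v := by
  classical
  have hspan := IsSimpleModule.span_singleton_eq_top A hw0
  let x : Module.End A V := Module.End.smulLeft S.casimir S.casimir_mem_center
  have hEx : S.E • x⁻¹ w = ζ • x⁻¹ w := by
    rw [← map_smul, hw, ← algebraMap_smul A ζ, map_smul, algebraMap_smul]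
  obtain ⟨p, hp⟩ := S.exists_aeval_casimir_smul_eq hr hζ hw hspan hEx
  have hinv : x⁻¹ = Polynomial.aeval x p :=
    LinearMap.ext_on hspan (Set.eqOn_singleton.2 ((aeval_smulLeft_apply _ p w).trans hp).symm)
  have hint : IsIntegral k x := isIntegral_of_inv_mem_adjoin
    (hinv ▸ Polynomial.aeval_mem_adjoin_singleton k x)
  obtain ⟨ϑ, hϑ⟩ := mem_range_algebraMap_of_isIntegral hint
  exact ⟨ϑ, fun v => (LinearMap.congr_fun hϑ v).symm⟩

end Whittaker

section Annihilator

variable {k : Type*} [Field k] {r : kˣ} {ρ : k[T;T⁻¹]} {A : Type*} [Ring A] [Algebra k A]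
  (S : QuantumSmithTriple r ρ A) {V : Type*} [AddCommGroup V] [Module k V] [Module A V]
  [IsScalarTower k A V] {ζ ϑ : k} {w : V}

/-- The pairs `(a, s)` such that `a` acts on `k[K, K⁻¹] • w` by the twisted multiplication
`f ↦ P * f (s T)` for some nonzero Laurent polynomial `P`. -/
noncomputable def twistedMulSubmonoid (w : V) : Submonoid (A × kˣ) where
  carrier := {x | ∃ P : k[T;T⁻¹], P ≠ 0 ∧
    ∀ f, x.1 • S.evalK f • w = S.evalK (P * laurentScale x.2 f) • w}
  one_mem' := ⟨1, one_ne_zero, fun f => by simp⟩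
  mul_mem' := by
    rintro ⟨a, s⟩ ⟨b, t⟩ ⟨P, hP, ha⟩ ⟨Q, hQ, hb⟩
    refine ⟨P * laurentScale s Q,
      mul_ne_zero hP ((map_ne_zero_iff _ (laurentScale_injective s)).2 hQ), fun f => ?_⟩
    rw [Prod.mk_mul_mk, mul_smul, hb, ha, map_mul (laurentScale s), laurentScale_laurentScale,
      mul_assoc]

theorem E_mem_twistedMulSubmonoid (hζ : ζ ≠ 0) (hw : S.E • w = ζ • w) :
    (S.E, r⁻¹) ∈ S.twistedMulSubmonoid w := by
  refine ⟨algebraMap k k[T;T⁻¹] ζ, ?_, fun f => ?_⟩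
  · rwa [Ne, FaithfulSMul.algebraMap_eq_zero_iff]
  · rw [E_smul_evalK_smul S hw, ← Algebra.smul_def, map_smul, smul_assoc]

theorem F_mem_twistedMulSubmonoid (hζ : ζ ≠ 0) (hw : S.E • w = ζ • w)
    (hϑ : ∀ v : V, S.casimir • v = ϑ • v) (hρ : ρ ≠ algebraMap k k[T;T⁻¹] ϑ) :
    (S.F, r) ∈ S.twistedMulSubmonoid w := by
  refine ⟨ζ⁻¹ • (algebraMap k k[T;T⁻¹] ϑ - ρ),
    smul_ne_zero (inv_ne_zero hζ) (sub_ne_zero.2 hρ.symm), fun f => ?_⟩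
  have hcasimir : (S.casimir - S.evalK ρ) • w = S.evalK (algebraMap k k[T;T⁻¹] ϑ - ρ) • w := by
    rw [sub_smul, hϑ, map_sub, AlgHom.commutes, sub_smul, algebraMap_smul]
  rw [F_smul_evalK_smul S hζ hw, hcasimir, smul_mul_assoc, map_smul, smul_assoc, mul_comm, map_mul,
    mul_smul]

theorem weylMonomial_mem_twistedMulSubmonoid (hζ : ζ ≠ 0) (hw : S.E • w = ζ • w)
    (hϑ : ∀ v : V, S.casimir • v = ϑ • v) (hρ : ρ ≠ algebraMap k k[T;T⁻¹] ϑ) (n : ℤ) :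
    (S.weylMonomial n, r ^ n) ∈ S.twistedMulSubmonoid w := by
  have hmem := mul_mem
    (pow_mem (S.F_mem_twistedMulSubmonoid hζ hw hϑ hρ) n.toNat)
    (pow_mem (S.E_mem_twistedMulSubmonoid hζ hw) (-n).toNat)
  have hr : r ^ n.toNat * r⁻¹ ^ (-n).toNat = r ^ n := by
    rw [inv_pow, ← zpow_natCast, ← zpow_natCast, ← zpow_neg, ← zpow_add]
    congr 1
    omega
  rwa [Prod.pow_mk, Prod.pow_mk, Prod.mk_mul_mk, hr] at hmem

theorem eq_zero_of_sum_evalK_mul_weylMonomial_smul_eq_zero (hr : ¬IsOfFinOrder r) (hζ : ζ ≠ 0)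
    (hw0 : w ≠ 0) (hw : S.E • w = ζ • w) (hϑ : ∀ v : V, S.casimir • v = ϑ • v)
    (hρ : ρ ≠ algebraMap k k[T;T⁻¹] ϑ) {s : Finset ℤ} {g : ℤ → k[T;T⁻¹]}
    (h : ∀ v : V, (∑ n ∈ s, S.evalK (g n) * S.weylMonomial n) • v = 0) :
    ∀ n ∈ s, g n = 0 := by
  choose P hP hmonomial using S.weylMonomial_mem_twistedMulSubmonoid hζ hw hϑ hρ
  have hsum (f : k[T;T⁻¹]) : ∑ n ∈ s, g n * P n * laurentScale (r ^ n) f = 0 := by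
    refine S.evalK_smul_injective hr hζ hw0 hw ?_
    simpa [Finset.sum_smul, mul_smul, hmonomial, mul_assoc] using h (S.evalK f • w)
  have hcoeff := linearIndependent_iff'.1 (linearIndependent_laurentScale_zpow hr) s
    (fun n => g n * P n) (LinearMap.ext fun f => by simpa using hsum f)
  exact fun n hn => (mul_eq_zero.1 (hcoeff n hn)).resolve_right (hP n)

theorem exists_annihilator_eq_span [IsAlgClosed k] [IsSimpleModule A V] (hr : ¬IsOfFinOrder r)
    (hρ : ∀ ϑ : k, ρ ≠ algebraMap k k[T;T⁻¹] ϑ) (hζ : ζ ≠ 0) (hw0 : w ≠ 0)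
    (hw : S.E • w = ζ • w) :
    ∃ ϑ : k, Module.annihilator A V = Ideal.span {S.casimir - algebraMap k A ϑ} := by
  obtain ⟨ϑ, hϑ⟩ := S.exists_casimir_smul_eq_smul hr hζ hw0 hw
  have hspan_le : Ideal.span {S.casimir - algebraMap k A ϑ} ≤ Module.annihilator A V := by
    rw [Ideal.span_singleton_le_iff_mem, Module.mem_annihilator]
    intro v
    rw [sub_smul, hϑ, algebraMap_smul, sub_self]
  refine ⟨ϑ, le_antisymm (fun a ha => ?_) hspan_le⟩
  obtain ⟨s, g, hg⟩ := S.exists_sub_sum_evalK_mul_weylMonomial_mem ϑ a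
  have hsum : ∑ n ∈ s, S.evalK (g n) * S.weylMonomial n ∈ Module.annihilator A V :=
    (Submodule.sub_mem_iff_right _ ha).1 (hspan_le hg)
  have hg0 := S.eq_zero_of_sum_evalK_mul_weylMonomial_smul_eq_zero hr hζ hw0 hw hϑ (hρ ϑ)
    (Module.mem_annihilator.1 hsum)
  rwa [Finset.sum_eq_zero fun n hn => by rw [hg0 n hn, map_zero, zero_mul], sub_zero] at hg

end Annihilator

end QuantumSmithTriple

section QuantumSmithAlgebra

variable {F : Type u} [Field F] {q : Fˣ} {m : ℕ}

/-- The Laurent polynomial `ρ` for which the element `c` of the quantum Smith algebra equals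
`F'E + ρ(K)`. -/
noncomputable def quantumSmithRho (q : Fˣ) (m : ℕ) : F[T;T⁻¹] :=
  ((q : F) ^ m / (((q : F) ^ m - ((q : F) ^ m)⁻¹) * ((q : F) - (q : F)⁻¹))) • T (m : ℤ) +
    (((q : F) ^ m)⁻¹ / (((q : F) ^ m - ((q : F) ^ m)⁻¹) * ((q : F) - (q : F)⁻¹))) • T (-(m : ℤ))

theorem quantumSmithRho_sub_laurentScale (hq : (q : F) ^ m - ((q : F) ^ m)⁻¹ ≠ 0) :
    quantumSmithRho q m - laurentScale (q ^ 2)⁻¹ (quantumSmithRho q m) =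
      ((q : F) - (q : F)⁻¹)⁻¹ • (T (m : ℤ) - T (-(m : ℤ))) := by
  have hqm : (q : F) ^ m ≠ 0 := pow_ne_zero _ q.ne_zero
  have hscale : (((q ^ 2)⁻¹ ^ (m : ℤ) : Fˣ) : F) = ((q : F) ^ m)⁻¹ ^ 2 := by
    simp [← pow_mul, mul_comm]
  have hscale_neg : (((q ^ 2)⁻¹ ^ (-(m : ℤ)) : Fˣ) : F) = ((q : F) ^ m) ^ 2 := by
    simp [← pow_mul, mul_comm]
  simp only [quantumSmithRho, map_add, map_smul, laurentScale_T, hscale, hscale_neg, smul_sub,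
    smul_smul]
  generalize (q : F) ^ m = x at *
  generalize (q : F) - (q : F)⁻¹ = y
  have hx : x / ((x - x⁻¹) * y) - x / ((x - x⁻¹) * y) * x⁻¹ ^ 2 = y⁻¹ := by
    calc _ = (x - x⁻¹) / ((x - x⁻¹) * y) := by field_simp
      _ = y⁻¹ := div_mul_cancel_left₀ hq y
  have hx_inv : x⁻¹ / ((x - x⁻¹) * y) - x⁻¹ / ((x - x⁻¹) * y) * x ^ 2 = -y⁻¹ := by
    calc _ = -((x - x⁻¹) / ((x - x⁻¹) * y)) := by field_simp; ring
      _ = -y⁻¹ := by rw [div_mul_cancel_left₀ hq]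
  rw [add_sub_add_comm, ← sub_smul, ← sub_smul, hx, hx_inv, neg_smul, sub_eq_add_neg]

theorem quantumSmithRho_ne_algebraMap (hm : m ≠ 0) (hq : (q : F) ^ m - ((q : F) ^ m)⁻¹ ≠ 0)
    (hq₁ : (q : F) - (q : F)⁻¹ ≠ 0) (ϑ : F) :
    quantumSmithRho q m ≠ algebraMap F F[T;T⁻¹] ϑ := by
  intro h
  have hsub := quantumSmithRho_sub_laurentScale hq
  rw [h, AlgHom.commutes, sub_self, eq_comm, smul_eq_zero_iff_right (inv_ne_zero hq₁),
    sub_eq_zero] at hsub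
  have hcoeff := congrArg (fun f : F[T;T⁻¹] => f.coeff m) hsub
  have hne : -(m : ℤ) ≠ m := by omega
  simp [hne] at hcoeff

section Relations

variable (q : F) (m : ℕ)

theorem qsK_mul_qsE : qsK F q m * qsE F q m = q ^ 2 • (qsE F q m * qsK F q m) := by
  simpa [qsE, qsK, Algebra.smul_def] using RingQuot.mkAlgHom_rel F (QSmithRel.KE (q := q) (m := m))

theorem qsK_mul_qsF : qsK F q m * qsF F q m = (q ^ 2)⁻¹ • (qsF F q m * qsK F q m) := by
  simpa [qsF, qsK, Algebra.smul_def] using RingQuot.mkAlgHom_rel F (QSmithRel.KF (q := q) (m := m))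

theorem qsK_mul_qsKinv : qsK F q m * qsKinv F q m = 1 := by
  simpa [qsK, qsKinv] using RingQuot.mkAlgHom_rel F (QSmithRel.KKinv (q := q) (m := m))

theorem qsKinv_mul_qsK : qsKinv F q m * qsK F q m = 1 := by
  simpa [qsK, qsKinv] using RingQuot.mkAlgHom_rel F (QSmithRel.KinvK (q := q) (m := m))

theorem qsE_mul_qsF_sub_qsF_mul_qsE :
    qsE F q m * qsF F q m - qsF F q m * qsE F q m =
      (q - q⁻¹)⁻¹ • (qsK F q m ^ m - qsKinv F q m ^ m) := by
  simpa [qsE, qsF, qsK, qsKinv, Algebra.smul_def] using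
    RingQuot.mkAlgHom_rel F (QSmithRel.EF (q := q) (m := m))

theorem adjoin_qsE_qsF_qsK_qsKinv_eq_top :
    Algebra.adjoin F {qsE F q m, qsF F q m, qsK F q m, qsKinv F q m} = ⊤ := by
  have hsurj := RingQuot.mkAlgHom_surjective F (QSmithRel F q m)
  rw [eq_top_iff, ← (AlgHom.range_eq_top _).2 hsurj, ← Algebra.map_top,
    ← FreeAlgebra.adjoin_range_ι, AlgHom.map_adjoin, ← Set.range_comp]
  refine Algebra.adjoin_mono ?_
  rintro _ ⟨i, rfl⟩
  fin_cases i <;> simp [qsE, qsF, qsK, qsKinv]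

end Relations

/-- `K` as a unit of the quantum Smith algebra. -/
@[simps]
noncomputable def quantumSmithUnitK (q : F) (m : ℕ) : (QSmithAlgebra F q m)ˣ where
  val := qsK F q m
  inv := qsKinv F q m
  val_inv := qsK_mul_qsKinv q m
  inv_val := qsKinv_mul_qsK q m

theorem laurentAeval_quantumSmithUnitK_T_natCast (q : F) (m n : ℕ) :
    laurentAeval (quantumSmithUnitK q m) (T n : F[T;T⁻¹]) = qsK F q m ^ n := by
  simp

theorem laurentAeval_quantumSmithUnitK_T_neg_natCast (q : F) (m n : ℕ) :
    laurentAeval (quantumSmithUnitK q m) (T (-n) : F[T;T⁻¹]) = qsKinv F q m ^ n := by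
  rw [laurentAeval_T, zpow_neg, zpow_natCast, ← inv_pow, Units.val_pow_eq_pow_val]
  rfl

/-- The quantum Smith algebra as a quantum Smith triple with `r = q²`. -/
noncomputable def quantumSmithTriple (hq : (q : F) ^ m - ((q : F) ^ m)⁻¹ ≠ 0) :
    QuantumSmithTriple (q ^ 2) (quantumSmithRho q m) (QSmithAlgebra F (q : F) m) where
  E := qsE F q m
  F := qsF F q m
  K := quantumSmithUnitK (q : F) m
  K_mul_E := by simpa using qsK_mul_qsE (q : F) m
  K_mul_F := by simpa using qsK_mul_qsF (q : F) m
  E_mul_F_sub_F_mul_E := by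
    rw [quantumSmithRho_sub_laurentScale hq, map_smul, map_sub,
      laurentAeval_quantumSmithUnitK_T_natCast, laurentAeval_quantumSmithUnitK_T_neg_natCast,
      qsE_mul_qsF_sub_qsF_mul_qsE]
  adjoin_eq_top := adjoin_qsE_qsF_qsK_qsKinv_eq_top (q : F) m

theorem casimir_quantumSmithTriple (hq : (q : F) ^ m - ((q : F) ^ m)⁻¹ ≠ 0) :
    (quantumSmithTriple hq).casimir = qsC F (q : F) m := by
  change qsF F (q : F) m * qsE F (q : F) m +
    laurentAeval (quantumSmithUnitK (q : F) m) (quantumSmithRho q m) = _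
  rw [quantumSmithRho, map_add, map_smul, map_smul, laurentAeval_quantumSmithUnitK_T_natCast,
    laurentAeval_quantumSmithUnitK_T_neg_natCast, Algebra.smul_def, Algebra.smul_def, ← add_assoc,
    qsC]

end QuantumSmithAlgebra

theorem stmt_19_general {F : Type u} [Field F] [IsAlgClosed F] (m : ℕ) (hm : 1 ≤ m) (q : F)
    (hq0 : q ≠ 0) (hqru : ∀ k : ℕ, 1 ≤ k → (q ^ 2) ^ k ≠ 1) (ζ : F) (hζ : ζ ≠ 0)
    (V : Type v) [AddCommGroup V] [Module (QSmithAlgebra F q m) V]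
    [IsSimpleModule (QSmithAlgebra F q m) V] (w : V) (hw0 : w ≠ 0)
    (hE : qsE F q m • w = algebraMap F (QSmithAlgebra F q m) ζ • w) :
    ∃ ϑ : F, {a : QSmithAlgebra F q m | ∀ v : V, a • v = 0} =
      ↑(Ideal.span {qsC F q m - algebraMap F (QSmithAlgebra F q m) ϑ}) := by
  let _ : Module F V := Module.compHom V (algebraMap F (QSmithAlgebra F q m))
  have : IsScalarTower F (QSmithAlgebra F q m) V :=
    ⟨fun c a v => by rw [Algebra.smul_def, mul_smul]; rfl⟩
  lift q to Fˣ using hq0.isUnit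
  have hq₁ : (q : F) - (q : F)⁻¹ ≠ 0 :=
    sub_inv_ne_zero_of_sq_ne_one q.ne_zero (by simpa using hqru 1 le_rfl)
  have hqm : (q : F) ^ m - ((q : F) ^ m)⁻¹ ≠ 0 :=
    sub_inv_ne_zero_of_sq_ne_one (pow_ne_zero m q.ne_zero)
      (by simpa [pow_right_comm] using hqru m hm)
  have hr : ¬IsOfFinOrder (q ^ 2) := by
    rw [isOfFinOrder_iff_pow_eq_one]
    rintro ⟨n, hn, hpow⟩
    exact hqru n hn (by simpa using congrArg Units.val hpow)
  have hρ := quantumSmithRho_ne_algebraMap (Nat.one_le_iff_ne_zero.1 hm) hqm hq₁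
  rw [← casimir_quantumSmithTriple hqm]
  obtain ⟨ϑ, hϑ⟩ := (quantumSmithTriple hqm).exists_annihilator_eq_span hr hρ hζ hw0 hE
  exact ⟨ϑ, hϑ ▸ Set.ext fun a => Module.mem_annihilator.symm⟩

/-- Over an algebraically closed field of characteristic `≠ 2`, with
`q ≠ 0, ±1` and `q²` not a root of unity, for every simple Whittaker module `V = A·w`,
`E·w = ζ·w` (`ζ ≠ 0`) of the quantum Smith algebra `A` there is `ϑ ∈ F` with
`Ann_A(V) = A·(c − ϑ)`. -/
theorem stmt_19 {F : Type u} [Field F] [IsAlgClosed F] (h2 : (2 : F) ≠ 0)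
    (m : ℕ) (hm : 1 ≤ m)
    (q : F) (hq0 : q ≠ 0) (hq1 : q ≠ 1) (hqm1 : q ≠ -1)
    (hqru : ∀ k : ℕ, 1 ≤ k → (q ^ 2) ^ k ≠ 1)
    (ζ : F) (hζ : ζ ≠ 0)
    (V : Type v) [AddCommGroup V] [Module (QSmithAlgebra F q m) V]
    (hsimple : IsSimpleModule (QSmithAlgebra F q m) V)
    (w : V) (hcyc : ∀ v : V, ∃ a : QSmithAlgebra F q m, a • w = v)
    (hE : qsE F q m • w = algebraMap F (QSmithAlgebra F q m) ζ • w) :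
    ∃ ϑ : F,
      {a : QSmithAlgebra F q m | ∀ v : V, a • v = 0} =
        ↑(Ideal.span {qsC F q m - algebraMap F (QSmithAlgebra F q m) ϑ}) := by
  have := hsimple.nontrivial
  exact stmt_19_general m hm q hq0 hqru ζ hζ V w (ne_zero_of_forall_exists_smul_eq hcyc) hE
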